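/- arXiv:2504.06506 — 2 statements merged into one kernel-verified Lean document; each statement's English description precedes it below -/
import Mathlib

section
/- Let H₁, H₂, H₃ be complex Hilbert spaces, and let T₁ : dom(T₁) ⊆ H₁ → H₂ and T₂ : dom(T₂) ⊆ H₂ → H₃ be Fredholm operators (in particular densely defined and closed). Then the product T₂T₁ is densely defined, closed, and Fredholm, and ind(T₂T₁) = ind(T₁) + ind(T₂). -/
open scoped InnerProductSpace
open Cardinal

noncomputable section

variable {E F G H : Type*}
  [NormedAddCommGroup E] [InnerProductSpace ℂ E] [CompleteSpace E]
  [NormedAddCommGroup F] [InnerProductSpace ℂ F] [CompleteSpace F]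
  [NormedAddCommGroup G] [InnerProductSpace ℂ G] [CompleteSpace G]
  [NormedAddCommGroup H] [InnerProductSpace ℂ H] [CompleteSpace H]

/-- The product (composition) `T₂T₁` of two partially defined linear operators, with domain
`dom(T₂T₁) = {f ∈ dom T₁ | T₁ f ∈ dom T₂}` and value `(T₂T₁) f = T₂ (T₁ f)`. -/
def pcomp {E F G : Type*}
    [NormedAddCommGroup E] [InnerProductSpace ℂ E]
    [NormedAddCommGroup F] [InnerProductSpace ℂ F]
    [NormedAddCommGroup G] [InnerProductSpace ℂ G]
    (T₂ : F →ₗ.[ℂ] G) (T₁ : E →ₗ.[ℂ] F) : E →ₗ.[ℂ] G where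
  domain := (T₂.domain.comap T₁.toFun).map T₁.domain.subtype
  toFun := T₂.toFun ∘ₗ
    (T₁.toFun.restrict (p := T₂.domain.comap T₁.toFun) (q := T₂.domain) fun _ hx => hx) ∘ₗ
    (Submodule.equivMapOfInjective T₁.domain.subtype (Submodule.injective_subtype _)
      (T₂.domain.comap T₁.toFun)).symm.toLinearMap

/-- The identity as a partially defined operator (domain all of `X`). -/
def pid (X : Type*) [NormedAddCommGroup X] [InnerProductSpace ℂ X] : X →ₗ.[ℂ] X :=
  ⟨⊤, (⊤ : Submodule ℂ X).subtype⟩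

/-- Powers of a partially defined operator: `S⁰ = I`, `S¹ = S`, and recursively
`dom(S^m) = {f ∈ dom(S^{m-1}) | S^{m-1} f ∈ dom S}`, `S^m f = S (S^{m-1} f)`. -/
def pmapPow {X : Type*} [NormedAddCommGroup X] [InnerProductSpace ℂ X]
    (S : X →ₗ.[ℂ] X) : ℕ → X →ₗ.[ℂ] X
  | 0 => pid X
  | 1 => S
  | (n + 2) => pcomp S (pmapPow S (n + 1))

/-- The kernel of `A - μ·I` as a submodule of the domain of `A`. -/
def kerAt {X : Type*} [NormedAddCommGroup X] [InnerProductSpace ℂ X]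
    (A : X →ₗ.[ℂ] X) (μ : ℂ) : Submodule ℂ A.domain :=
  LinearMap.ker (A.toFun - μ • A.domain.subtype)

/-- Deficiency index `n₊(S) = dim ker(S* - i·I)`, a Hilbert-space dimension as a cardinal. -/
def nPlus (S : H →ₗ.[ℂ] H) : Cardinal := Module.rank ℂ (kerAt S.adjoint Complex.I)

/-- Deficiency index `n₋(S) = dim ker(S* + i·I)`, a Hilbert-space dimension as a cardinal. -/
def nMinus (S : H →ₗ.[ℂ] H) : Cardinal := Module.rank ℂ (kerAt S.adjoint (-Complex.I))

/-- The symmetry condition `⟪Sf, g⟫ = ⟪f, Sg⟫` for all `f, g` in the domain of `S`. -/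
def IsSymmP {X : Type*} [NormedAddCommGroup X] [InnerProductSpace ℂ X]
    (S : X →ₗ.[ℂ] X) : Prop :=
  ∀ f g : S.domain, ⟪S f, (g : X)⟫_ℂ = ⟪(f : X), S g⟫_ℂ

/-- The defect number of `T` at `0`: `def(T,0) = dim ker(T*)`, as a cardinal. -/
def defect0 (T : E →ₗ.[ℂ] F) : Cardinal := Module.rank ℂ (LinearMap.ker T.adjoint.toFun)

/-- `0` belongs to the field of regularity of `T`: there is `c > 0` with
`‖T f‖ ≥ c ‖f‖` for all `f ∈ dom T`. -/
def ZeroRegular {X Y : Type*} [NormedAddCommGroup X] [InnerProductSpace ℂ X]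
    [NormedAddCommGroup Y] [InnerProductSpace ℂ Y] (T : X →ₗ.[ℂ] Y) : Prop :=
  ∃ c : ℝ, 0 < c ∧ ∀ f : T.domain, c * ‖(f : X)‖ ≤ ‖T f‖

/-- `T` is Fredholm: densely defined, closed, with closed range, and finite-dimensional
kernel and cokernel (= kernel of the adjoint). -/
def IsFredholmP (T : E →ₗ.[ℂ] F) : Prop :=
  Dense (T.domain : Set E) ∧ T.IsClosed ∧
    IsClosed ((LinearMap.range T.toFun : Submodule ℂ F) : Set F) ∧
    Module.rank ℂ (LinearMap.ker T.toFun) < ℵ₀ ∧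
    Module.rank ℂ (LinearMap.ker T.adjoint.toFun) < ℵ₀

/-- `T` is left semi-Fredholm: densely defined, closed, with closed range and
finite-dimensional kernel. -/
def IsLeftSemiFredholmP (T : E →ₗ.[ℂ] F) : Prop :=
  Dense (T.domain : Set E) ∧ T.IsClosed ∧
    IsClosed ((LinearMap.range T.toFun : Submodule ℂ F) : Set F) ∧
    Module.rank ℂ (LinearMap.ker T.toFun) < ℵ₀

/-- The (semi-)Fredholm index `ind(T) = dim ker T - dim ker T*` (as an integer,
via `finrank`). -/
def indP (T : E →ₗ.[ℂ] F) : ℤ :=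
  (Module.finrank ℂ (LinearMap.ker T.toFun) : ℤ) -
    (Module.finrank ℂ (LinearMap.ker T.adjoint.toFun) : ℤ)

/-!
A closed operator `T` has the same kernel and range as the bounded map `(x, T x) ↦ T x` on its
graph, so the open mapping theorem applies to it. As `ran T₁` is closed and has finite
codimension, it is complementary to a finite-dimensional subspace of the dense subspace `dom T₂`.
This makes the preimage of `dom T₂` under `T₁` dense, and it shows that replacing the codomain of
`T₁` by `dom T₂` changes neither its kernel nor its cokernel; the index formula is then the
algebraic one for composable linear maps. The graph of `T₂T₁` is closed because it is the image of
a closed subspace under a bounded map with closed range and finite-dimensional kernel.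
-/

section LinearAlgebra

variable {R M N P : Type*} [Ring R] [AddCommGroup M] [Module R M] [AddCommGroup N] [Module R N]
  [AddCommGroup P] [Module R P]

lemma range_submoduleComap (f : M →ₗ[R] N) (p : Submodule R N) :
    LinearMap.range (f.submoduleComap p) = (LinearMap.range f).comap p.subtype := by
  ext y
  constructor
  · rintro ⟨x, rfl⟩
    exact ⟨x, rfl⟩
  · rintro ⟨x, hx⟩
    exact ⟨⟨x, show f x ∈ p from hx ▸ y.2⟩, Subtype.ext hx⟩

/-- The isomorphism `ker f ≃ ker (f : f⁻¹(p) → p)`. -/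
def kerEquivKerSubmoduleComap (f : M →ₗ[R] N) (p : Submodule R N) :
    LinearMap.ker f ≃ₗ[R] LinearMap.ker (f.submoduleComap p) :=
  (Submodule.comapSubtypeEquivOfLe (LinearMap.ker_le_comap f)).symm ≪≫ₗ
    LinearEquiv.ofEq _ _ (LinearMap.ker_restrict _).symm

/-- The second isomorphism theorem `p ⧸ (p ⊓ q) ≃ N ⧸ q` for submodules spanning `N`. -/
def quotientComapSubtypeEquiv {p q : Submodule R N} (h : Codisjoint p q) :
    (p ⧸ q.comap p.subtype) ≃ₗ[R] N ⧸ q :=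
  Submodule.quotEquivOfEq _ _ (by rw [LinearMap.ker_comp, Submodule.ker_mkQ]) ≪≫ₗ
    LinearMap.quotKerEquivOfSurjective (q.mkQ ∘ₗ p.subtype) (by
      rw [← LinearMap.range_eq_top, LinearMap.range_comp, Submodule.range_subtype,
        Submodule.map_mkQ_eq_top, codisjoint_iff.1 h.symm])

/-- The isomorphism of cokernels `p ⧸ (p ⊓ ran f) ≃ N ⧸ ran f` for `p` and `ran f` spanning `N`. -/
def cokerSubmoduleComapEquiv (f : M →ₗ[R] N) {p : Submodule R N}
    (h : Codisjoint p (LinearMap.range f)) :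
    (p ⧸ LinearMap.range (f.submoduleComap p)) ≃ₗ[R] N ⧸ LinearMap.range f :=
  Submodule.quotEquivOfEq _ _ (range_submoduleComap f p) ≪≫ₗ quotientComapSubtypeEquiv h

lemma index_submoduleComap (f : M →ₗ[R] N) {p : Submodule R N}
    (h : Codisjoint p (LinearMap.range f)) : (f.submoduleComap p).index = f.index := by
  rw [LinearMap.index_eq_finrank_sub, LinearMap.index_eq_finrank_sub,
    (kerEquivKerSubmoduleComap f p).finrank_eq, (cokerSubmoduleComapEquiv f h).finrank_eq]

lemma index_comp_linearEquiv (f : N →ₗ[R] P) (e : M ≃ₗ[R] N) :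
    (f ∘ₗ e.toLinearMap).index = f.index := by
  rw [LinearMap.index_eq_finrank_sub, LinearMap.index_eq_finrank_sub, LinearEquiv.range_comp,
    LinearMap.ker_comp, (e.ofSubmodule' _).finrank_eq]

/-- The product `g ∘ f` of partial linear maps on `{x ∈ dom f | f x ∈ dom g}`, built like `pcomp`
but over any ring. -/
def partialComp (g : N →ₗ.[R] P) (f : M →ₗ.[R] N) : M →ₗ.[R] P where
  domain := (g.domain.comap f.toFun).map f.domain.subtype
  toFun := g.toFun ∘ₗ f.toFun.submoduleComap g.domain ∘ₗ
    (Submodule.equivMapOfInjective f.domain.subtype (Submodule.injective_subtype _)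
      (g.domain.comap f.toFun)).symm.toLinearMap

/-- The identification of the domain of `partialComp g f` with the submodule `f⁻¹(dom g)` of
`dom f`. -/
def partialCompDomainEquiv (g : N →ₗ.[R] P) (f : M →ₗ.[R] N) :
    (partialComp g f).domain ≃ₗ[R] g.domain.comap f.toFun :=
  (Submodule.equivMapOfInjective f.domain.subtype (Submodule.injective_subtype _)
    (g.domain.comap f.toFun)).symm

lemma partialComp_toFun (g : N →ₗ.[R] P) (f : M →ₗ.[R] N) :
    (partialComp g f).toFun = g.toFun ∘ₗ f.toFun.submoduleComap g.domain ∘ₗ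
      (partialCompDomainEquiv g f).toLinearMap :=
  rfl

lemma partialComp_apply (g : N →ₗ.[R] P) (f : M →ₗ.[R] N) (x : f.domain) (hx : f x ∈ g.domain) :
    partialComp g f ⟨x, x, hx, rfl⟩ = g ⟨f x, hx⟩ :=
  congrArg (g.toFun ∘ₗ f.toFun.submoduleComap g.domain) <|
    (partialCompDomainEquiv g f).apply_symm_apply ⟨x, hx⟩

lemma mem_graph_partialComp {g : N →ₗ.[R] P} {f : M →ₗ.[R] N} {x : M} {z : P} :
    (x, z) ∈ (partialComp g f).graph ↔ ∃ y, (x, y) ∈ f.graph ∧ (y, z) ∈ g.graph := by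
  simp only [LinearPMap.mem_graph_iff]
  constructor
  · rintro ⟨⟨_, x, hx, rfl⟩, rfl, rfl⟩
    exact ⟨f x, ⟨x, rfl, rfl⟩, ⟨f x, hx⟩, rfl, (partialComp_apply g f x hx).symm⟩
  · rintro ⟨_, ⟨x, rfl, rfl⟩, ⟨_, hx⟩, rfl, rfl⟩
    exact ⟨⟨x, x, hx, rfl⟩, rfl, partialComp_apply g f x hx⟩

/-- The isomorphism `x ↦ (x, f x)` from the domain of a partial linear map onto its graph. -/
def domainEquivGraph (f : M →ₗ.[R] N) : f.domain ≃ₗ[R] f.graph :=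
  LinearEquiv.ofBijective ((f.domain.subtype.prod f.toFun).codRestrict f.graph f.mem_graph) <| by
    constructor
    · intro x y hxy
      exact Subtype.ext (congrArg (fun w : f.graph => (w : M × N).1) hxy)
    · rintro ⟨w, hw⟩
      obtain ⟨x, rfl⟩ := f.mem_graph_iff'.1 hw
      exact ⟨x, rfl⟩

end LinearAlgebra

section Index

variable {K M N P : Type*} [DivisionRing K] [AddCommGroup M] [Module K M] [AddCommGroup N]
  [Module K N] [AddCommGroup P] [Module K P] (g : N →ₗ.[K] P) (f : M →ₗ.[K] N)

lemma finiteDimensional_ker_partialComp [FiniteDimensional K (LinearMap.ker f.toFun)]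
    [FiniteDimensional K (LinearMap.ker g.toFun)] :
    FiniteDimensional K (LinearMap.ker (partialComp g f).toFun) := by
  have : FiniteDimensional K (LinearMap.ker (f.toFun.submoduleComap g.domain)) :=
    .equiv (kerEquivKerSubmoduleComap f.toFun g.domain)
  have : FiniteDimensional K (LinearMap.ker (g.toFun ∘ₗ f.toFun.submoduleComap g.domain)) := by
    rw [LinearMap.ker_comp]
    infer_instance
  rw [partialComp_toFun, ← LinearMap.comp_assoc, LinearMap.ker_comp]
  exact .equiv ((partialCompDomainEquiv g f).ofSubmodule' _).symm

variable {g f}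

lemma finiteDimensional_coker_partialComp [FiniteDimensional K (N ⧸ LinearMap.range f.toFun)]
    [FiniteDimensional K (P ⧸ LinearMap.range g.toFun)]
    (h : Codisjoint g.domain (LinearMap.range f.toFun)) :
    FiniteDimensional K (P ⧸ LinearMap.range (partialComp g f).toFun) := by
  have : FiniteDimensional K (g.domain ⧸ LinearMap.range (f.toFun.submoduleComap g.domain)) :=
    .equiv (cokerSubmoduleComapEquiv f.toFun h).symm
  rw [partialComp_toFun, LinearMap.range_comp, LinearEquiv.range_comp]
  infer_instance

lemma index_partialComp [FiniteDimensional K (LinearMap.ker f.toFun)]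
    [FiniteDimensional K (LinearMap.ker g.toFun)]
    [FiniteDimensional K (N ⧸ LinearMap.range f.toFun)]
    [FiniteDimensional K (P ⧸ LinearMap.range g.toFun)]
    (h : Codisjoint g.domain (LinearMap.range f.toFun)) :
    (partialComp g f).toFun.index = f.toFun.index + g.toFun.index := by
  have : FiniteDimensional K (LinearMap.ker (f.toFun.submoduleComap g.domain)) :=
    .equiv (kerEquivKerSubmoduleComap f.toFun g.domain)
  have : FiniteDimensional K (g.domain ⧸ LinearMap.range (f.toFun.submoduleComap g.domain)) :=
    .equiv (cokerSubmoduleComapEquiv f.toFun h).symm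
  rw [partialComp_toFun, ← LinearMap.comp_assoc, index_comp_linearEquiv, LinearMap.index_comp,
    index_submoduleComap f.toFun h, add_comm]

end Index

section BoundedMaps

variable {𝕜 X Y Z : Type*} [NontriviallyNormedField 𝕜] [NormedAddCommGroup X] [NormedSpace 𝕜 X]
  [NormedAddCommGroup Y] [NormedSpace 𝕜 Y] [NormedAddCommGroup Z] [NormedSpace 𝕜 Z]

section ClosedRange

variable [CompleteSpace X] [CompleteSpace Y] (u : X →L[𝕜] Y) (C : Submodule 𝕜 Y) [CompleteSpace C]

lemma isOpenQuotientMap_coprod_subtypeL (h : Codisjoint C u.range) :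
    IsOpenQuotientMap (u.coprod C.subtypeL) := by
  have hsurj : Function.Surjective (u.coprod C.subtypeL) := by
    rw [← ContinuousLinearMap.coe_coe, ← LinearMap.range_eq_top, ContinuousLinearMap.range_coprod,
      Submodule.toLinearMap_subtypeL, Submodule.range_subtype,
      codisjoint_iff.1 h.symm]
  exact ⟨hsurj, ContinuousLinearMap.continuous _, ContinuousLinearMap.isOpenMap _ hsurj⟩

lemma isClosed_range_of_isCompl (h : IsCompl C u.range) : IsClosed (u.range : Set Y) := by
  have hpre : u.coprod C.subtypeL ⁻¹' (u.range : Set Y) = {w | w.2 = 0} := by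
    ext ⟨x, c⟩
    have hc : (c : Y) ∈ u.range ↔ c = 0 :=
      ⟨fun hc => Subtype.ext (Submodule.disjoint_def.1 h.disjoint c c.2 hc), by
        rintro rfl; exact zero_mem _⟩
    exact (Submodule.add_mem_iff_right u.range ⟨x, rfl⟩).trans hc
  rw [← (isOpenQuotientMap_coprod_subtypeL u C h.codisjoint).isQuotientMap.isClosed_preimage, hpre]
  exact isClosed_eq continuous_snd continuous_const

lemma dense_comap_of_le {D : Submodule 𝕜 Y} (hD : Dense (D : Set Y)) (hCD : C ≤ D)
    (h : Codisjoint C u.range) : Dense (D.comap u.toLinearMap : Set X) := by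
  have hdense := (isOpenQuotientMap_coprod_subtypeL u C h).dense_preimage_iff.2 hD
  refine (Prod.fst_surjective.denseRange.dense_image continuous_fst hdense).mono ?_
  rintro _ ⟨⟨x, c⟩, hx, rfl⟩
  exact (D.add_mem_iff_left (hCD c.2)).1 hx

end ClosedRange

lemma isClosed_map_of_isClosed_range [CompleteSpace 𝕜] [CompleteSpace X] [CompleteSpace Y]
    (u : X →L[𝕜] Y) (hu : IsClosed (u.range : Set Y)) [FiniteDimensional 𝕜 u.ker]
    {A : Submodule 𝕜 X} (hA : IsClosed (A : Set X)) : IsClosed (A.map u.toLinearMap : Set Y) := by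
  have : CompleteSpace u.range := hu.completeSpace_coe
  have hquot : Topology.IsQuotientMap u.rangeRestrict :=
    u.rangeRestrict.isQuotientMap u.toLinearMap.surjective_rangeRestrict
  have hpre : u ⁻¹' (A.map u.toLinearMap : Set Y) = (A ⊔ u.ker : Submodule 𝕜 X) := by
    rw [← Submodule.comap_map_eq]; rfl
  rw [hu.isClosedEmbedding_subtypeVal.isClosed_iff_preimage_isClosed (by
    rw [Subtype.range_coe]; exact LinearMap.map_le_range), ← hquot.isClosed_preimage,
    ← Set.preimage_comp]
  exact hpre ▸ Submodule.isClosed_sup_finiteDimensional A u.ker hA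

variable [CompleteSpace 𝕜]

lemma codisjoint_of_dense {D R : Submodule 𝕜 Y} (hD : Dense (D : Set Y))
    (hR : IsClosed (R : Set Y)) [FiniteDimensional 𝕜 (Y ⧸ R)] : Codisjoint D R := by
  have hclosed : IsClosed ((D ⊔ R : Submodule 𝕜 Y) : Set Y) :=
    Submodule.isClosed_mono_of_finiteDimensional_quotient hR le_sup_right
  rw [codisjoint_iff, ← SetLike.coe_set_eq, Submodule.top_coe, ← hclosed.closure_eq]
  exact (hD.mono (SetLike.coe_subset_coe.2 le_sup_left)).closure_eq

variable [CompleteSpace X] [CompleteSpace Y] (u : X →L[𝕜] Y) [FiniteDimensional 𝕜 (Y ⧸ u.range)]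

lemma isClosed_range_of_finiteDimensional_coker : IsClosed (u.range : Set Y) := by
  obtain ⟨C, hC⟩ := Submodule.exists_isCompl u.range
  have : FiniteDimensional 𝕜 C := .equiv (Submodule.quotientEquivOfIsCompl _ _ hC)
  have : CompleteSpace C := FiniteDimensional.complete 𝕜 C
  exact isClosed_range_of_isCompl u C hC.symm

lemma dense_comap_of_finiteDimensional_coker {D : Submodule 𝕜 Y} (hD : Dense (D : Set Y)) :
    Dense (D.comap u.toLinearMap : Set X) := by
  obtain ⟨C, hCD, hC⟩ :=
    (codisjoint_of_dense hD (isClosed_range_of_finiteDimensional_coker u)).exists_isCompl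
  have : FiniteDimensional 𝕜 C := .equiv (Submodule.quotientEquivOfIsCompl _ _ hC.symm)
  have : CompleteSpace C := FiniteDimensional.complete 𝕜 C
  exact dense_comap_of_le u C hD hCD hC.codisjoint

end BoundedMaps

section ClosedOperators

variable {𝕜 X Y Z : Type*} [NontriviallyNormedField 𝕜] [NormedAddCommGroup X] [NormedSpace 𝕜 X]
  [NormedAddCommGroup Y] [NormedSpace 𝕜 Y] [NormedAddCommGroup Z] [NormedSpace 𝕜 Z]

/-- The bounded map `(x, T x) ↦ T x` on the graph of an unbounded operator `T`. -/
def graphSnd (T : X →ₗ.[𝕜] Y) : T.graph →L[𝕜] Y :=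
  (ContinuousLinearMap.snd 𝕜 X Y).comp T.graph.subtypeL

lemma range_graphSnd (T : X →ₗ.[𝕜] Y) : (graphSnd T).range = LinearMap.range T.toFun :=
  ((domainEquivGraph T).range_comp (graphSnd T).toLinearMap).symm

/-- The isomorphism `x ↦ (x, 0)` from the kernel of `T` onto the kernel of `graphSnd T`. -/
def kerEquivKerGraphSnd (T : X →ₗ.[𝕜] Y) : LinearMap.ker T.toFun ≃ₗ[𝕜] (graphSnd T).ker :=
  (domainEquivGraph T).ofSubmodule' (graphSnd T).ker

lemma denseRange_graph_fst {T : X →ₗ.[𝕜] Y} (hT : Dense (T.domain : Set X)) :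
    DenseRange fun w : T.graph => (w : X × Y).1 :=
  hT.mono fun x hx => ⟨⟨_, T.mem_graph ⟨x, hx⟩⟩, rfl⟩

lemma dense_domain_partialComp {T₂ : Y →ₗ.[𝕜] Z} {T₁ : X →ₗ.[𝕜] Y}
    (h₁ : Dense (T₁.domain : Set X))
    (h : Dense (T₂.domain.comap (graphSnd T₁).toLinearMap : Set T₁.graph)) :
    Dense ((partialComp T₂ T₁).domain : Set X) := by
  refine ((denseRange_graph_fst h₁).dense_image (by fun_prop) h).mono ?_
  rintro _ ⟨⟨⟨x, y⟩, hxy⟩, hy, rfl⟩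
  exact LinearPMap.mem_domain_of_mem_graph
    (mem_graph_partialComp.2 ⟨y, hxy, T₂.mem_graph ⟨y, hy⟩⟩)

lemma isClosed_partialComp [CompleteSpace 𝕜] [CompleteSpace X] [CompleteSpace Y] [CompleteSpace Z]
    {T₂ : Y →ₗ.[𝕜] Z} {T₁ : X →ₗ.[𝕜] Y} (h₁ : T₁.IsClosed) (h₂ : T₂.IsClosed)
    (hrange : IsClosed (LinearMap.range T₂.toFun : Set Z))
    [FiniteDimensional 𝕜 (LinearMap.ker T₂.toFun)] : (partialComp T₂ T₁).IsClosed := by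
  have : CompleteSpace T₂.graph := IsClosed.completeSpace_coe (hs := h₂)
  let u : X × T₂.graph →L[𝕜] X × Z := (ContinuousLinearMap.id 𝕜 X).prodMap (graphSnd T₂)
  let j : X × T₂.graph →L[𝕜] X × Y := (ContinuousLinearMap.id 𝕜 X).prodMap
    ((ContinuousLinearMap.fst 𝕜 Y Z).comp T₂.graph.subtypeL)
  have hgraph : (partialComp T₂ T₁).graph = (T₁.graph.comap j.toLinearMap).map u.toLinearMap := by
    ext ⟨x, z⟩
    rw [mem_graph_partialComp]
    constructor
    · rintro ⟨y, hxy, hyz⟩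
      exact ⟨(x, ⟨(y, z), hyz⟩), hxy, rfl⟩
    · rintro ⟨⟨_, ⟨⟨y, _⟩, hyz⟩⟩, hxy, hxz⟩
      obtain ⟨rfl, rfl⟩ := Prod.mk.inj hxz
      exact ⟨y, hxy, hyz⟩
  have hu : IsClosed (u.range : Set (X × Z)) := by
    have : u.range = Submodule.prod ⊤ (LinearMap.range T₂.toFun) := by
      rw [← range_graphSnd, ← LinearMap.range_id]
      exact LinearMap.range_prodMap _ _
    rw [this]
    exact isClosed_univ.prod hrange
  have : FiniteDimensional 𝕜 (graphSnd T₂).ker := .equiv (kerEquivKerGraphSnd T₂)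
  have : FiniteDimensional 𝕜 u.ker := by
    have hker : u.ker = Submodule.prod ⊥ (graphSnd T₂).ker := by
      rw [← LinearMap.ker_id]
      exact LinearMap.ker_prodMap _ _
    rw [hker]
    exact Module.Finite.iff_fg.2 (Submodule.fg_bot.prod (Module.Finite.iff_fg.1 this))
  rw [LinearPMap.IsClosed, hgraph]
  exact isClosed_map_of_isClosed_range u hu (h₁.preimage j.continuous)

/-- A Fredholm operator between Banach spaces, possibly unbounded, defined by the dimensions of its
kernel and cokernel; closedness of the range is then automatic, see
`IsFredholmPMap.isClosed_range`. -/
structure IsFredholmPMap (T : X →ₗ.[𝕜] Y) : Prop where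
  dense_domain : Dense (T.domain : Set X)
  isClosed : T.IsClosed
  finite_ker : FiniteDimensional 𝕜 (LinearMap.ker T.toFun)
  finite_coker : FiniteDimensional 𝕜 (Y ⧸ LinearMap.range T.toFun)

variable [CompleteSpace 𝕜] [CompleteSpace X] [CompleteSpace Y]

lemma IsFredholmPMap.isClosed_range {T : X →ₗ.[𝕜] Y} (hT : IsFredholmPMap T) :
    IsClosed (LinearMap.range T.toFun : Set Y) := by
  have : CompleteSpace T.graph := IsClosed.completeSpace_coe (hs := hT.isClosed)
  have := hT.finite_coker
  rw [← range_graphSnd] at this ⊢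
  exact isClosed_range_of_finiteDimensional_coker (graphSnd T)

lemma IsFredholmPMap.dense_comap_graphSnd {T : X →ₗ.[𝕜] Y} (hT : IsFredholmPMap T)
    {D : Submodule 𝕜 Y} (hD : Dense (D : Set Y)) :
    Dense (D.comap (graphSnd T).toLinearMap : Set T.graph) := by
  have : CompleteSpace T.graph := IsClosed.completeSpace_coe (hs := hT.isClosed)
  have := hT.finite_coker
  rw [← range_graphSnd] at this
  exact dense_comap_of_finiteDimensional_coker (graphSnd T) hD

theorem fredholm_product_index_general [CompleteSpace Z] {T₁ : X →ₗ.[𝕜] Y} {T₂ : Y →ₗ.[𝕜] Z}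
    (h₁ : IsFredholmPMap T₁) (h₂ : IsFredholmPMap T₂) :
    IsFredholmPMap (partialComp T₂ T₁) ∧
      (partialComp T₂ T₁).toFun.index = T₁.toFun.index + T₂.toFun.index := by
  have := h₁.finite_ker
  have := h₂.finite_ker
  have := h₁.finite_coker
  have := h₂.finite_coker
  have hcodisjoint := codisjoint_of_dense h₂.dense_domain h₁.isClosed_range
  exact ⟨{
    dense_domain :=
      dense_domain_partialComp h₁.dense_domain (h₁.dense_comap_graphSnd h₂.dense_domain)
    isClosed := isClosed_partialComp h₁.isClosed h₂.isClosed h₂.isClosed_range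
    finite_ker := finiteDimensional_ker_partialComp T₂ T₁
    finite_coker := finiteDimensional_coker_partialComp hcodisjoint },
    index_partialComp hcodisjoint⟩

end ClosedOperators

section Adjoint

variable {𝕜 X Y : Type*} [RCLike 𝕜] [NormedAddCommGroup X] [InnerProductSpace 𝕜 X]
  [CompleteSpace X] [NormedAddCommGroup Y] [InnerProductSpace 𝕜 Y] {T : X →ₗ.[𝕜] Y}

lemma map_subtype_ker_adjoint (hT : Dense (T.domain : Set X)) :
    (LinearMap.ker T.adjoint.toFun).map T.adjoint.domain.subtype = (LinearMap.range T.toFun)ᗮ := by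
  ext y
  rw [Submodule.mem_orthogonal']
  constructor
  · rintro ⟨z, hz, rfl⟩ _ ⟨x, rfl⟩
    have hformal := LinearPMap.adjoint_isFormalAdjoint hT z x
    rwa [show T.adjoint z = 0 from hz, inner_zero_left, eq_comm] at hformal
  · intro hy
    have hzero (x : T.domain) : ⟪(0 : X), (x : X)⟫_𝕜 = ⟪y, T x⟫_𝕜 := by
      rw [inner_zero_left]
      exact (hy _ ⟨x, rfl⟩).symm
    have hmem : y ∈ T.adjoint.domain := LinearPMap.mem_adjoint_domain_of_exists y ⟨0, hzero⟩
    exact ⟨⟨y, hmem⟩, LinearPMap.adjoint_apply_eq hT ⟨y, hmem⟩ hzero, rfl⟩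

/-- The isomorphism `Y ⧸ ran T ≃ (ran T)ᗮ = ker T*` for a densely defined `T` whose range admits an
orthogonal projection. -/
def cokerEquivKerAdjoint [(LinearMap.range T.toFun).HasOrthogonalProjection]
    (hT : Dense (T.domain : Set X)) :
    (Y ⧸ LinearMap.range T.toFun) ≃ₗ[𝕜] LinearMap.ker T.adjoint.toFun :=
  Submodule.quotientEquivOfIsCompl _ _ (LinearMap.range T.toFun).isCompl_orthogonal ≪≫ₗ
    LinearEquiv.ofEq _ _ (map_subtype_ker_adjoint hT).symm ≪≫ₗ
      (Submodule.equivMapOfInjective _ (Submodule.injective_subtype _) _).symm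

end Adjoint

lemma isFredholmP_iff {T : E →ₗ.[ℂ] F} : IsFredholmP T ↔ IsFredholmPMap T := by
  rw [IsFredholmP, Module.rank_lt_aleph0_iff, Module.rank_lt_aleph0_iff]
  constructor
  · rintro ⟨hdense, hclosed, hrange, hker, hadjoint⟩
    have : CompleteSpace (LinearMap.range T.toFun) := hrange.completeSpace_coe
    exact ⟨hdense, hclosed, hker, .equiv (cokerEquivKerAdjoint hdense).symm⟩
  · intro hT
    have : CompleteSpace (LinearMap.range T.toFun) := hT.isClosed_range.completeSpace_coe
    have := hT.finite_coker
    exact ⟨hT.dense_domain, hT.isClosed, hT.isClosed_range, hT.finite_ker,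
      .equiv (cokerEquivKerAdjoint hT.dense_domain)⟩

lemma IsFredholmPMap.indP_eq_index {T : E →ₗ.[ℂ] F}
    (hT : IsFredholmPMap T) : indP T = T.toFun.index := by
  have : CompleteSpace (LinearMap.range T.toFun) := hT.isClosed_range.completeSpace_coe
  rw [indP, LinearMap.index_eq_finrank_sub, (cokerEquivKerAdjoint hT.dense_domain).finrank_eq]

/-- The product of two Fredholm operators between complex Hilbert spaces is densely
defined, closed, and Fredholm, and `ind(T₂T₁) = ind(T₁) + ind(T₂)`. -/
theorem fredholm_product_index (T₁ : E →ₗ.[ℂ] F) (T₂ : F →ₗ.[ℂ] G)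
    (h₁ : IsFredholmP T₁) (h₂ : IsFredholmP T₂) :
    IsFredholmP (pcomp T₂ T₁) ∧ indP (pcomp T₂ T₁) = indP T₁ + indP T₂ := by
  rw [isFredholmP_iff] at h₁ h₂
  obtain ⟨h, hindex⟩ := fredholm_product_index_general h₁ h₂
  rw [show pcomp T₂ T₁ = partialComp T₂ T₁ from rfl, h.indP_eq_index, h₁.indP_eq_index,
    h₂.indP_eq_index]
  exact ⟨isFredholmP_iff.2 h, hindex⟩
end
end

section
/- Let S be a densely defined, closed, symmetric operator in a complex Hilbert space H (with deficiency indices possibly infinite), let k ∈ ℕ, k ≥ 1, and assume that S^{2ℓ} is densely defined for every ℓ ∈ {1,…,k}. Then S^{2k} is symmetric and closed, it satisfies ‖S^{2k}f + f‖ ≥ ‖f‖ for all f ∈ dom(S^{2k}), and in cardinal arithmetic its deficiency indices satisfy n₊(S^{2k}) = n₋(S^{2k}) = k·n₊(S) + k·n₋(S), where the deficiency indices are Hilbert-space dimensions taken as cardinals. -/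
open scoped InnerProductSpace
open Cardinal

noncomputable section

variable {E F G H : Type*}
  [NormedAddCommGroup E] [InnerProductSpace ℂ E] [CompleteSpace E]
  [NormedAddCommGroup F] [InnerProductSpace ℂ F] [CompleteSpace F]
  [NormedAddCommGroup G] [InnerProductSpace ℂ G] [CompleteSpace G]
  [NormedAddCommGroup H] [InnerProductSpace ℂ H] [CompleteSpace H]

/-!
For nonreal `a`, the operator `S^{2k} - a` is the product of the `S - μ` over the `2k`-th roots `μ`
of `a`. These are nonreal, so every factor is closed and bounded below by `|im μ|`; hence so is the
product, and the defect numbers of the factors add up. The defect number of `S - μ` is constant on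
each open half-plane, and the roots come in `k` pairs `±z` with one member in each half-plane, so
the defect number of `S^{2k}` at `a` is `k·n₊(S) + k·n₋(S)`.
-/

universe u

section Hilbert

variable {𝕜 : Type*} [RCLike 𝕜] {K K' : Type u}
  [NormedAddCommGroup K] [InnerProductSpace 𝕜 K]
  [NormedAddCommGroup K'] [InnerProductSpace 𝕜 K']

theorem norm_le_norm_add_of_re_inner_nonneg {x y : K} (h : 0 ≤ RCLike.re (inner 𝕜 x y)) :
    ‖y‖ ≤ ‖x + y‖ := by
  rw [← sq_le_sq₀ (norm_nonneg _) (norm_nonneg _), norm_add_sq (𝕜 := 𝕜)]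
  nlinarith [sq_nonneg ‖x‖]

theorem rank_le_rank_orthogonal_of_disjoint {U M : Submodule 𝕜 K} [M.HasOrthogonalProjection]
    (h : Disjoint U M) : Module.rank 𝕜 U ≤ Module.rank 𝕜 Mᗮ := by
  refine LinearMap.rank_le_of_injective
    ((Mᗮ.orthogonalProjectionOnto : K →ₗ[𝕜] Mᗮ) ∘ₗ U.subtype) ?_
  rw [← LinearMap.ker_eq_bot, LinearMap.ker_eq_bot']
  rintro ⟨x, hxU⟩ hx
  have hxM : x ∈ M := by
    rw [← M.orthogonal_orthogonal]
    exact Submodule.orthogonalProjectionOnto_eq_zero_iff.1 hx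
  exact Subtype.ext (Submodule.disjoint_def.1 h x hxU hxM)

theorem rank_orthogonal_eq_add_of_le {M R : Submodule 𝕜 K} [R.HasOrthogonalProjection]
    (h : M ≤ R) :
    Module.rank 𝕜 Mᗮ = Module.rank 𝕜 Rᗮ + Module.rank 𝕜 (Mᗮ ⊓ R : Submodule 𝕜 K) := by
  have hsup : Rᗮ ⊔ Mᗮ ⊓ R = Mᗮ := by
    simpa only [Submodule.orthogonal_orthogonal, inf_comm] using
      Submodule.sup_orthogonal_inf_of_hasOrthogonalProjection (Submodule.orthogonal_le h)
  have hinf : Rᗮ ⊓ (Mᗮ ⊓ R) = ⊥ :=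
    (R.orthogonal_disjoint.symm.mono_right inf_le_right).eq_bot
  have hrank := Submodule.rank_sup_add_rank_inf_eq Rᗮ (Mᗮ ⊓ R)
  rwa [hsup, hinf, rank_bot, add_zero] at hrank

theorem mem_ker_orthogonalProjectionOnto_comp (G : K →L[𝕜] K') (L : Submodule 𝕜 K')
    [L.HasOrthogonalProjection] {z : K} :
    z ∈ (Lᗮ.orthogonalProjectionOnto ∘L G).ker ↔ G z ∈ L :=
  LinearMap.mem_ker.trans <|
    (Submodule.orthogonalProjectionOnto_eq_zero_iff (K := Lᗮ) (v := G z)).trans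
      (by rw [L.orthogonal_orthogonal])

-- Both `B`, restricted to `(ker B)ᗮ`, and its adjoint are injective.
theorem rank_orthogonal_ker_of_denseRange [CompleteSpace K] [CompleteSpace K'] {B : K →L[𝕜] K'}
    (hB : DenseRange B) : Module.rank 𝕜 B.kerᗮ = Module.rank 𝕜 K' := by
  apply le_antisymm
  · refine LinearMap.rank_le_of_injective ((B : K →ₗ[𝕜] K') ∘ₗ B.kerᗮ.subtype) ?_
    rw [← LinearMap.ker_eq_bot, LinearMap.ker_eq_bot']
    exact fun x hx => Subtype.ext (Submodule.disjoint_def.1 B.ker.orthogonal_disjoint x hx x.2)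
  · have hmem : ∀ y, B.adjoint y ∈ B.kerᗮ := fun y => by
      rw [B.orthogonal_ker]
      exact Submodule.le_topologicalClosure _ ⟨y, rfl⟩
    refine LinearMap.rank_le_of_injective
      ((B.adjoint : K' →ₗ[𝕜] K).codRestrict B.kerᗮ hmem) ?_
    rw [← LinearMap.ker_eq_bot, LinearMap.ker_codRestrict, ← B.orthogonal_range]
    exact Submodule.topologicalClosure_eq_top_iff.1
      (Submodule.dense_iff_topologicalClosure_eq_top.1 hB)

end Hilbert

section Product

variable {X Y Z : Type*}
  [NormedAddCommGroup X] [InnerProductSpace ℂ X]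
  [NormedAddCommGroup Y] [InnerProductSpace ℂ Y]
  [NormedAddCommGroup Z] [InnerProductSpace ℂ Z]

theorem mem_graph_pcomp {T₂ : Y →ₗ.[ℂ] Z} {T₁ : X →ₗ.[ℂ] Y} {x : X} {z : Z} :
    (x, z) ∈ (pcomp T₂ T₁).graph ↔ ∃ y, (x, y) ∈ T₁.graph ∧ (y, z) ∈ T₂.graph := by
  have happly (f : T₁.domain) (hf : T₁ f ∈ T₂.domain) :
      pcomp T₂ T₁ ⟨f, f, hf, rfl⟩ = T₂ ⟨T₁ f, hf⟩ := by
    have hsymm : (Submodule.equivMapOfInjective T₁.domain.subtype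
        (Submodule.injective_subtype _) (T₂.domain.comap T₁.toFun)).symm ⟨f, f, hf, rfl⟩ =
        ⟨f, hf⟩ := (LinearEquiv.symm_apply_eq _).2 (Subtype.ext rfl)
    exact congrArg (fun g : T₂.domain.comap T₁.toFun => T₂ ⟨T₁ g, g.2⟩) hsymm
  simp only [LinearPMap.mem_graph_iff]
  constructor
  · rintro ⟨⟨_, f, hf, rfl⟩, rfl, rfl⟩
    exact ⟨T₁ f, ⟨f, rfl, rfl⟩, ⟨T₁ f, hf⟩, rfl, (happly f hf).symm⟩
  · rintro ⟨_, ⟨f, rfl, rfl⟩, ⟨_, hf⟩, rfl, rfl⟩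
    exact ⟨⟨f, f, hf, rfl⟩, rfl, happly f hf⟩

theorem mem_range_pcomp {T₂ : Y →ₗ.[ℂ] Z} {T₁ : X →ₗ.[ℂ] Y} {z : Z} :
    z ∈ (pcomp T₂ T₁).toFun.range ↔ ∃ y ∈ T₁.toFun.range, (y, z) ∈ T₂.graph := by
  simp only [← LinearPMap.graph_map_snd_eq_range, Submodule.mem_map, Prod.exists,
    LinearMap.snd_apply, exists_eq_right, mem_graph_pcomp]
  exact exists_comm.trans (exists_congr fun _ => exists_and_right)

theorem range_pcomp_le {T₂ : Y →ₗ.[ℂ] Z} {T₁ : X →ₗ.[ℂ] Y} :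
    (pcomp T₂ T₁).toFun.range ≤ T₂.toFun.range := fun _ hz =>
  let ⟨y, _, hyz⟩ := mem_range_pcomp.1 hz
  T₂.mem_range_iff.2 ⟨y, hyz⟩

theorem ZeroRegular.pcomp {T₂ : Y →ₗ.[ℂ] Z} {T₁ : X →ₗ.[ℂ] Y}
    (h₂ : ZeroRegular T₂) (h₁ : ZeroRegular T₁) : ZeroRegular (pcomp T₂ T₁) := by
  obtain ⟨c₂, hc₂, hT₂⟩ := h₂
  obtain ⟨c₁, hc₁, hT₁⟩ := h₁
  refine ⟨c₂ * c₁, mul_pos hc₂ hc₁, fun f => ?_⟩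
  obtain ⟨_, hf, hg⟩ := mem_graph_pcomp.1 (LinearPMap.mem_graph _ f)
  obtain ⟨f', hff', rfl⟩ := (LinearPMap.mem_graph_iff _).1 hf
  obtain ⟨g, hgf, hgz⟩ := (LinearPMap.mem_graph_iff _).1 hg
  simp only at hff' hgf hgz
  calc c₂ * c₁ * ‖(f : X)‖ = c₂ * (c₁ * ‖(f' : X)‖) := by rw [hff', mul_assoc]
    _ ≤ c₂ * ‖T₁ f'‖ := by gcongr; exact hT₁ f'
    _ = c₂ * ‖(g : Y)‖ := by rw [hgf]
    _ ≤ ‖T₂ g‖ := hT₂ g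
    _ = _ := by rw [hgz]

theorem ZeroRegular.isClosed_range [CompleteSpace X] [CompleteSpace Y] {T : X →ₗ.[ℂ] Y}
    (hT : ZeroRegular T) (hc : T.IsClosed) : IsClosed (T.toFun.range : Set Y) := by
  obtain ⟨c, hcpos, hbound⟩ := hT
  have hgraph : IsClosed (T.graph : Set (X × Y)) := hc
  have : CompleteSpace T.graph := hgraph.completeSpace_coe
  let snd : T.graph →L[ℂ] Y := ContinuousLinearMap.snd ℂ X Y ∘L T.graph.subtypeL
  have hanti : AntilipschitzWith (max c⁻¹ 1).toNNReal snd := by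
    refine snd.antilipschitz_of_bound ?_
    rintro ⟨⟨x, y⟩, hxy⟩
    obtain ⟨f, rfl, rfl⟩ := (LinearPMap.mem_graph_iff _).1 hxy
    have hf : ‖(f : X)‖ ≤ c⁻¹ * ‖T f‖ := (le_inv_mul_iff₀ hcpos).2 (hbound f)
    rw [Real.coe_toNNReal _ (by positivity)]
    change max ‖(f : X)‖ ‖T f‖ ≤ max c⁻¹ 1 * ‖T f‖
    rw [max_mul_of_nonneg _ _ (norm_nonneg _), one_mul]
    exact max_le_max_right _ hf
  convert hanti.isClosed_range snd.uniformContinuous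
  rw [← LinearPMap.graph_map_snd_eq_range]
  ext y
  simp [snd]

theorem ZeroRegular.exists_leftInverse {T : X →ₗ.[ℂ] Y} (hT : ZeroRegular T)
    [T.toFun.range.HasOrthogonalProjection] :
    ∃ G : Y →L[ℂ] X, (∀ f : T.domain, G (T f) = f) ∧ ∀ y ∈ T.toFun.rangeᗮ, G y = 0 := by
  obtain ⟨c, hcpos, hbound⟩ := hT
  have hker : T.toFun.ker = ⊥ := LinearMap.ker_eq_bot'.2 fun f hf => by
    have hcf : c * ‖(f : X)‖ ≤ 0 := by simpa [← T.toFun_eq_coe, hf] using hbound f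
    have : ‖(f : X)‖ ≤ 0 := nonpos_of_mul_nonpos_right hcf hcpos
    exact Subtype.ext (norm_le_zero_iff.1 this)
  obtain ⟨g, hg⟩ := T.toFun.exists_leftInverse_of_injective hker
  have hgT (f : T.domain) : g (T f) = f := LinearMap.congr_fun hg f
  let P := T.toFun.range.orthogonalProjectionOnto
  let G₀ : Y →ₗ[ℂ] X := T.domain.subtype ∘ₗ g ∘ₗ T.toFun.range.subtype ∘ₗ (P : Y →ₗ[ℂ] _)
  have hG₀ (y : Y) : ‖G₀ y‖ ≤ c⁻¹ * ‖y‖ := by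
    obtain ⟨f, hf⟩ := (P y).2
    have hGy : G₀ y = f := by simp [G₀, ← hf, hgT]
    calc ‖G₀ y‖ ≤ c⁻¹ * ‖T f‖ := by rw [hGy]; exact (le_inv_mul_iff₀ hcpos).2 (hbound f)
      _ = c⁻¹ * ‖P y‖ := by rw [← T.toFun_eq_coe, hf, Submodule.coe_norm]
      _ ≤ c⁻¹ * ‖y‖ := by
        gcongr
        exact T.toFun.range.norm_orthogonalProjectionOnto_apply_le y
  refine ⟨G₀.mkContinuous c⁻¹ hG₀, fun f => ?_, fun y hy => ?_⟩
  · have hP : P (T f) = ⟨T f, f, rfl⟩ :=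
      Submodule.orthogonalProjectionOnto_mem_subspace_eq_self (⟨T f, f, rfl⟩ : T.toFun.range)
    simp [G₀, hP, hgT]
  · have hP : P y = 0 := Submodule.orthogonalProjectionOnto_eq_zero_iff.2 hy
    simp [G₀, hP]

theorem ZeroRegular.isClosed_pcomp [CompleteSpace Y] [CompleteSpace Z] {T₂ : Y →ₗ.[ℂ] Z}
    {T₁ : X →ₗ.[ℂ] Y} (h₂ : ZeroRegular T₂) (hc₂ : T₂.IsClosed) (hc₁ : T₁.IsClosed) :
    (_root_.pcomp T₂ T₁).IsClosed := by
  have : CompleteSpace T₂.toFun.range := (h₂.isClosed_range hc₂).completeSpace_coe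
  obtain ⟨G, hG, -⟩ := h₂.exists_leftInverse
  have hgraph : ((_root_.pcomp T₂ T₁).graph : Set (X × Z)) =
      (fun p => (p.1, G p.2)) ⁻¹' T₁.graph ∩ (fun p => (G p.2, p.2)) ⁻¹' T₂.graph := by
    ext ⟨x, z⟩
    refine mem_graph_pcomp.trans ⟨?_, fun h => ⟨G z, h⟩⟩
    rintro ⟨y, hxy, hyz⟩
    obtain ⟨g, rfl, rfl⟩ := (LinearPMap.mem_graph_iff _).1 hyz
    simpa [hG] using hxy
  rw [LinearPMap.IsClosed, hgraph]
  exact (hc₁.preimage (by fun_prop)).inter (hc₂.preimage (by fun_prop))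

end Product

section ProductRank

variable {X : Type*} {Y Z : Type u}
  [NormedAddCommGroup X] [InnerProductSpace ℂ X]
  [NormedAddCommGroup Y] [InnerProductSpace ℂ Y] [CompleteSpace Y]
  [NormedAddCommGroup Z] [InnerProductSpace ℂ Z] [CompleteSpace Z]

/- `ran (T₂T₁)` is the subspace of `ran T₂` on which the bounded map `P G` vanishes, where `G` is
the inverse of `T₂`, extended by `0` to `(ran T₂)ᗮ`, and `P` the projection onto `(ran T₁)ᗮ`. The
range of `P G` is dense because that of `G` is `dom T₂`. -/
theorem rank_orthogonal_range_pcomp {T₂ : Y →ₗ.[ℂ] Z} {T₁ : X →ₗ.[ℂ] Y}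
    (hd : Dense (T₂.domain : Set Y)) (h₂ : ZeroRegular T₂)
    (hc₂ : T₂.IsClosed) (hL : IsClosed (T₁.toFun.range : Set Y)) :
    Module.rank ℂ (pcomp T₂ T₁).toFun.rangeᗮ =
      Module.rank ℂ T₂.toFun.rangeᗮ + Module.rank ℂ T₁.toFun.rangeᗮ := by
  set M := (pcomp T₂ T₁).toFun.range
  set R := T₂.toFun.range
  set L := T₁.toFun.range
  have : CompleteSpace R := (h₂.isClosed_range hc₂).completeSpace_coe
  have : CompleteSpace L := hL.completeSpace_coe
  obtain ⟨G, hG, hG_zero⟩ := h₂.exists_leftInverse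
  let B : Z →L[ℂ] Lᗮ := Lᗮ.orthogonalProjectionOnto ∘L G
  have hker : B.ker = M ⊔ Rᗮ := by
    ext z
    rw [mem_ker_orthogonalProjectionOnto_comp]
    constructor
    · intro hz
      obtain ⟨_, ⟨g, rfl⟩, r, hr, rfl⟩ := R.exists_add_mem_mem_orthogonal z
      rw [T₂.toFun_eq_coe, map_add, hG, hG_zero r hr, add_zero] at hz
      exact Submodule.add_mem_sup (mem_range_pcomp.2 ⟨g, hz, T₂.mem_graph g⟩) hr
    · intro hz
      obtain ⟨m, hm, r, hr, rfl⟩ := Submodule.mem_sup.1 hz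
      obtain ⟨y, hy, hym⟩ := mem_range_pcomp.1 hm
      obtain ⟨g, rfl, rfl⟩ := (LinearPMap.mem_graph_iff _).1 hym
      rwa [map_add, hG, hG_zero r hr, add_zero]
  have hdense : DenseRange B := by
    have hsurj : Function.Surjective Lᗮ.orthogonalProjectionOnto := fun y =>
      ⟨y, Submodule.orthogonalProjectionOnto_mem_subspace_eq_self y⟩
    refine (hsurj.denseRange.dense_image (map_continuous _) hd).mono ?_
    rintro _ ⟨g, hg, rfl⟩
    exact ⟨T₂ ⟨g, hg⟩, congrArg Lᗮ.orthogonalProjectionOnto (hG ⟨g, hg⟩)⟩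
  rw [rank_orthogonal_eq_add_of_le range_pcomp_le, ← rank_orthogonal_ker_of_denseRange hdense, hker,
    ← Submodule.inf_orthogonal, R.orthogonal_orthogonal]

end ProductRank

section Defect

variable {X : Type*} [NormedAddCommGroup X] [InnerProductSpace ℂ X]

/-- The operator `A - μI`, with the same domain as `A`. -/
def subScalar (A : X →ₗ.[ℂ] X) (μ : ℂ) : X →ₗ.[ℂ] X :=
  ⟨A.domain, A.toFun - μ • A.domain.subtype⟩

/-- The defect number of `A` at `μ`: the dimension of the orthogonal complement of
`ran (A - μI)`, which for densely defined `A` is `ker (A* - μ̄I)`. As for `nPlus`, dimension means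
`Module.rank`. -/
def defect (A : X →ₗ.[ℂ] X) (μ : ℂ) : Cardinal :=
  Module.rank ℂ (subScalar A μ).toFun.rangeᗮ

variable {S : X →ₗ.[ℂ] X}

theorem mem_range_subScalar {μ : ℂ} {y : X} :
    y ∈ (subScalar S μ).toFun.range ↔ ∃ f : S.domain, S f - μ • (f : X) = y := Iff.rfl

theorem mem_graph_subScalar {μ : ℂ} {x y : X} :
    (x, y) ∈ (subScalar S μ).graph ↔ (x, y + μ • x) ∈ S.graph := by
  simp only [LinearPMap.mem_graph_iff]
  refine exists_congr fun f => and_congr_right ?_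
  rintro rfl
  exact sub_eq_iff_eq_add

theorem isClosed_subScalar_iff {μ : ℂ} : (subScalar S μ).IsClosed ↔ S.IsClosed := by
  constructor
  · intro h
    have : (S.graph : Set (X × X)) = (fun p => (p.1, p.2 - μ • p.1)) ⁻¹' (subScalar S μ).graph := by
      ext ⟨x, y⟩
      change _ ↔ (x, y - μ • x) ∈ (subScalar S μ).graph
      rw [mem_graph_subScalar, sub_add_cancel]
      rfl
    rw [LinearPMap.IsClosed, this]
    exact h.preimage (by fun_prop)
  · intro h
    have : ((subScalar S μ).graph : Set (X × X)) = (fun p => (p.1, p.2 + μ • p.1)) ⁻¹' S.graph := by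
      ext ⟨x, y⟩
      exact mem_graph_subScalar
    rw [LinearPMap.IsClosed, this]
    exact h.preimage (by fun_prop)

-- The imaginary part of `⟪f, (S - μ)f⟫` is `-(im μ)‖f‖²`.
theorem IsSymmP.abs_im_mul_norm_le (hS : IsSymmP S) (μ : ℂ) (f : S.domain) :
    |μ.im| * ‖(f : X)‖ ≤ ‖S f - μ • (f : X)‖ := by
  have hreal : (⟪(f : X), S f⟫_ℂ).im = 0 := by
    rw [← Complex.conj_eq_iff_im, inner_conj_symm, hS]
  have him : (⟪(f : X), S f - μ • (f : X)⟫_ℂ).im = -(μ.im * ‖(f : X)‖ ^ 2) := by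
    rw [inner_sub_right, inner_smul_right, Complex.sub_im, hreal, zero_sub,
      inner_self_eq_norm_sq_to_K]
    simp [← Complex.ofReal_pow]
  have hmul : |μ.im| * ‖(f : X)‖ * ‖(f : X)‖ ≤ ‖S f - μ • (f : X)‖ * ‖(f : X)‖ :=
    calc |μ.im| * ‖(f : X)‖ * ‖(f : X)‖ = |(⟪(f : X), S f - μ • (f : X)⟫_ℂ).im| := by
          rw [him, abs_neg, abs_mul, abs_of_nonneg (sq_nonneg ‖(f : X)‖), sq, mul_assoc]
      _ ≤ ‖⟪(f : X), S f - μ • (f : X)⟫_ℂ‖ := Complex.abs_im_le_norm _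
      _ ≤ ‖(f : X)‖ * ‖S f - μ • (f : X)‖ := norm_inner_le_norm _ _
      _ = ‖S f - μ • (f : X)‖ * ‖(f : X)‖ := mul_comm _ _
  rcases (norm_nonneg (f : X)).eq_or_lt with hf | hf
  · simp [← hf]
  · exact le_of_mul_le_mul_right hmul hf

theorem IsSymmP.zeroRegular_subScalar (hS : IsSymmP S) {μ : ℂ} (hμ : μ.im ≠ 0) :
    ZeroRegular (subScalar S μ) :=
  ⟨|μ.im|, abs_pos.2 hμ, hS.abs_im_mul_norm_le μ⟩

variable [CompleteSpace X]

theorem IsSymmP.defect_le (hS : IsSymmP S) (hc : S.IsClosed) {μ ν : ℂ} (h : ‖μ - ν‖ < |μ.im|) :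
    defect S ν ≤ defect S μ := by
  have hμ : μ.im ≠ 0 := abs_pos.1 ((norm_nonneg _).trans_lt h)
  have : CompleteSpace (subScalar S μ).toFun.range :=
    ((hS.zeroRegular_subScalar hμ).isClosed_range (isClosed_subScalar_iff.2 hc)).completeSpace_coe
  refine rank_le_rank_orthogonal_of_disjoint (Submodule.disjoint_def.2 ?_)
  rintro x horth hx
  obtain ⟨f, hf⟩ := mem_range_subScalar.1 hx
  have hinner : ⟪x + (μ - ν) • (f : X), x⟫_ℂ = 0 :=
    horth _ (mem_range_subScalar.2 ⟨f, by rw [← hf, sub_smul]; abel⟩)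
  have hupper : ‖x‖ ≤ ‖μ - ν‖ * ‖(f : X)‖ :=
    calc ‖x‖ ≤ ‖-(x + (μ - ν) • (f : X)) + x‖ :=
          norm_le_norm_add_of_re_inner_nonneg (𝕜 := ℂ) <| by
            rw [inner_neg_left, hinner, neg_zero, map_zero]
      _ = ‖-((μ - ν) • (f : X))‖ := by congr 1; abel
      _ = ‖μ - ν‖ * ‖(f : X)‖ := by rw [norm_neg, norm_smul]
  have hlower : |μ.im| * ‖(f : X)‖ ≤ ‖x‖ := hf ▸ hS.abs_im_mul_norm_le μ f
  have hf_zero : ‖(f : X)‖ ≤ 0 := by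
    by_contra! hpos
    exact (mul_lt_mul_of_pos_right h hpos).not_ge (hlower.trans hupper)
  simpa [norm_le_zero_iff.1 hf_zero] using hupper

-- Inside a half-plane, `IsSymmP.defect_le` applies both ways to nearby points.
theorem IsSymmP.defect_eq_of_isPreconnected (hS : IsSymmP S) (hc : S.IsClosed) {s : Set ℂ}
    (hs : IsPreconnected s) (him : ∀ z ∈ s, z.im ≠ 0) {μ ν : ℂ} (hμ : μ ∈ s) (hν : ν ∈ s) :
    defect S μ = defect S ν := by
  refine hs.induction₂ (fun x y => defect S x = defect S y) (fun x hx => ?_)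
    (fun _ _ _ _ _ _ => Eq.trans) (fun _ _ _ _ => Eq.symm) hμ hν
  have hpos : 0 < |x.im| := abs_pos.2 (him x hx)
  have hx_near : ∀ᶠ y in nhds x, ‖x - y‖ < |x.im| := by
    have : ContinuousAt (fun y : ℂ => ‖x - y‖) x := by fun_prop
    exact this.eventually_lt continuousAt_const (by simpa using hpos)
  have hy_near : ∀ᶠ y in nhds x, ‖y - x‖ < |y.im| := by
    have : ContinuousAt (fun y : ℂ => ‖y - x‖) x := by fun_prop
    exact this.eventually_lt (Complex.continuous_im.abs.continuousAt) (by simpa using hpos)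
  filter_upwards [hx_near.filter_mono nhdsWithin_le_nhds,
    hy_near.filter_mono nhdsWithin_le_nhds] with y hxy hyx
  exact le_antisymm (hS.defect_le hc hyx) (hS.defect_le hc hxy)

theorem IsSymmP.defect_eq_of_im_pos (hS : IsSymmP S) (hc : S.IsClosed) {μ : ℂ} (hμ : 0 < μ.im) :
    defect S μ = defect S Complex.I :=
  hS.defect_eq_of_isPreconnected hc (convex_halfSpace_im_gt 0).isPreconnected
    (fun _ hz => hz.ne') hμ (by simp)

theorem IsSymmP.defect_eq_of_im_neg (hS : IsSymmP S) (hc : S.IsClosed) {μ : ℂ} (hμ : μ.im < 0) :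
    defect S μ = defect S (-Complex.I) :=
  hS.defect_eq_of_isPreconnected hc (convex_halfSpace_im_lt 0).isPreconnected
    (fun _ hz => hz.ne) hμ (by simp)

theorem IsSymmP.defect_add_defect_neg (hS : IsSymmP S) (hc : S.IsClosed) {z : ℂ}
    (hz : z.im ≠ 0) :
    defect S z + defect S (-z) = defect S (-Complex.I) + defect S Complex.I := by
  rcases hz.lt_or_gt with hneg | hpos
  · rw [hS.defect_eq_of_im_neg hc hneg, hS.defect_eq_of_im_pos hc (μ := -z) (by simpa using hneg)]
  · rw [hS.defect_eq_of_im_pos hc hpos, hS.defect_eq_of_im_neg hc (μ := -z) (by simpa using hpos),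
      add_comm]

theorem map_subtype_kerAt_adjoint (hd : Dense (S.domain : Set X)) (z : ℂ) :
    (kerAt S.adjoint z).map S.adjoint.domain.subtype =
      (subScalar S (starRingEnd ℂ z)).toFun.rangeᗮ := by
  have mem_orthogonal_iff (x : X) : x ∈ (subScalar S (starRingEnd ℂ z)).toFun.rangeᗮ ↔
      ∀ f : S.domain, ⟪z • x, (f : X)⟫_ℂ = ⟪x, S f⟫_ℂ := by
    refine (Submodule.mem_orthogonal' _ x).trans
      ⟨fun h f => ?_, fun h y hy => ?_⟩
    · have hf := h _ (mem_range_subScalar.2 ⟨f, rfl⟩)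
      rw [inner_sub_right, inner_smul_right, sub_eq_zero] at hf
      rw [inner_smul_left, hf]
    · obtain ⟨f, rfl⟩ := mem_range_subScalar.1 hy
      rw [inner_sub_right, inner_smul_right, ← h f, inner_smul_left, sub_self]
  ext x
  rw [mem_orthogonal_iff]
  constructor
  · rintro ⟨y, hy, rfl⟩ f
    have hy : S.adjoint y = z • (y : X) := sub_eq_zero.1 hy
    simpa only [hy] using! LinearPMap.adjoint_isFormalAdjoint hd y f
  · intro h
    have hx : x ∈ S.adjoint.domain := LinearPMap.mem_adjoint_domain_of_exists x ⟨_, h⟩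
    exact ⟨⟨x, hx⟩, sub_eq_zero.2 (LinearPMap.adjoint_apply_eq hd ⟨x, hx⟩ h), rfl⟩

theorem rank_kerAt_adjoint (hd : Dense (S.domain : Set X)) (z : ℂ) :
    Module.rank ℂ (kerAt S.adjoint z) = defect S (starRingEnd ℂ z) := by
  rw [defect, ← map_subtype_kerAt_adjoint hd]
  exact (Submodule.equivMapOfInjective _ (Submodule.injective_subtype _) _).rank_eq

theorem nPlus_eq_defect (hd : Dense (S.domain : Set X)) : nPlus S = defect S (-Complex.I) := by
  rw [nPlus, rank_kerAt_adjoint hd, Complex.conj_I]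

theorem nMinus_eq_defect (hd : Dense (S.domain : Set X)) : nMinus S = defect S Complex.I := by
  rw [nMinus, rank_kerAt_adjoint hd, map_neg, Complex.conj_I, neg_neg]

end Defect

section Power

variable {X : Type*} [NormedAddCommGroup X] [InnerProductSpace ℂ X] {S : X →ₗ.[ℂ] X}

theorem mem_graph_pid {x y : X} : (x, y) ∈ (pid X).graph ↔ x = y := by
  rw [LinearPMap.mem_graph_iff]
  exact ⟨fun ⟨_, hx, hy⟩ => hx.symm.trans hy, fun h => ⟨⟨x, trivial⟩, rfl, h⟩⟩

theorem pid_pcomp {Y : Type*} [NormedAddCommGroup Y] [InnerProductSpace ℂ Y] (T : Y →ₗ.[ℂ] X) :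
    pcomp (pid X) T = T := by
  refine LinearPMap.eq_of_eq_graph (SetLike.ext fun ⟨x, z⟩ => mem_graph_pcomp.trans ?_)
  simp only [mem_graph_pid, exists_eq_right]

theorem pcomp_pid {Y : Type*} [NormedAddCommGroup Y] [InnerProductSpace ℂ Y] (T : X →ₗ.[ℂ] Y) :
    pcomp T (pid X) = T := by
  refine LinearPMap.eq_of_eq_graph (SetLike.ext fun ⟨x, z⟩ => mem_graph_pcomp.trans ?_)
  simp only [mem_graph_pid, exists_eq_left']

theorem pcomp_assoc {W Y Z : Type*} [NormedAddCommGroup W] [InnerProductSpace ℂ W]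
    [NormedAddCommGroup Y] [InnerProductSpace ℂ Y] [NormedAddCommGroup Z] [InnerProductSpace ℂ Z]
    (T₃ : Y →ₗ.[ℂ] Z) (T₂ : X →ₗ.[ℂ] Y) (T₁ : W →ₗ.[ℂ] X) :
    pcomp (pcomp T₃ T₂) T₁ = pcomp T₃ (pcomp T₂ T₁) := by
  refine LinearPMap.eq_of_eq_graph (SetLike.ext fun ⟨w, z⟩ => ?_)
  simp only [mem_graph_pcomp]
  grind

theorem pmapPow_succ (S : X →ₗ.[ℂ] X) : ∀ n, pmapPow S (n + 1) = pcomp S (pmapPow S n)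
  | 0 => (pcomp_pid S).symm
  | _ + 1 => rfl

theorem pmapPow_add (S : X →ₗ.[ℂ] X) (m n : ℕ) :
    pmapPow S (m + n) = pcomp (pmapPow S m) (pmapPow S n) := by
  induction m with
  | zero => rw [zero_add, pmapPow, pid_pcomp]
  | succ m ih => rw [Nat.succ_add, pmapPow_succ, ih, pmapPow_succ, pcomp_assoc]

theorem isSymmP_iff_graph : IsSymmP S ↔
    ∀ x y x' y' : X, (x, y) ∈ S.graph → (x', y') ∈ S.graph → ⟪y, x'⟫_ℂ = ⟪x, y'⟫_ℂ := by
  constructor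
  · intro hS x y x' y' h h'
    obtain ⟨f, rfl, rfl⟩ := (LinearPMap.mem_graph_iff _).1 h
    obtain ⟨g, rfl, rfl⟩ := (LinearPMap.mem_graph_iff _).1 h'
    exact hS f g
  · exact fun h f g => h _ _ _ _ (S.mem_graph f) (S.mem_graph g)

theorem IsSymmP.pmapPow (hS : IsSymmP S) (n : ℕ) : IsSymmP (pmapPow S n) := by
  rw [isSymmP_iff_graph] at hS ⊢
  induction n with
  | zero => exact isSymmP_iff_graph.1 fun _ _ => rfl
  | succ n ih =>
    intro x z x' z' h h'
    rw [pmapPow_succ, mem_graph_pcomp] at h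
    rw [pmapPow_add, mem_graph_pcomp] at h'
    obtain ⟨y, hxy, hyz⟩ := h
    obtain ⟨y', hxy', hyz'⟩ := h'
    rw [hS _ _ _ _ hyz hxy', ih _ _ _ _ hxy hyz']

theorem IsSymmP.re_inner_nonneg_of_mem_graph_pmapPow_two_mul (hS : IsSymmP S) {k : ℕ} {x z : X}
    (h : (x, z) ∈ (_root_.pmapPow S (2 * k)).graph) : 0 ≤ RCLike.re ⟪z, x⟫_ℂ := by
  rw [two_mul, pmapPow_add, mem_graph_pcomp] at h
  obtain ⟨y, hxy, hyz⟩ := h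
  rw [isSymmP_iff_graph.1 (hS.pmapPow k) _ _ _ _ hyz hxy]
  exact inner_self_nonneg

/-- The product `(S - μ₁I) ⋯ (S - μₙI)`, with its natural domain, for a list `[μ₁, …, μₙ]`. -/
def shiftProd (S : X →ₗ.[ℂ] X) : List ℂ → X →ₗ.[ℂ] X
  | [] => pid X
  | μ :: l => pcomp (subScalar S μ) (shiftProd S l)

theorem isClosed_pid : (pid X).IsClosed := by
  have : ((pid X).graph : Set (X × X)) = {p | p.1 = p.2} := Set.ext fun _ => mem_graph_pid
  rw [LinearPMap.IsClosed, this]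
  exact isClosed_eq continuous_fst continuous_snd

theorem IsSymmP.zeroRegular_shiftProd (hS : IsSymmP S) {l : List ℂ} (hl : ∀ μ ∈ l, μ.im ≠ 0) :
    ZeroRegular (shiftProd S l) := by
  induction l with
  | nil => exact ⟨1, one_pos, fun f => (one_mul _).le⟩
  | cons μ l ih =>
    obtain ⟨hμ, hl⟩ := List.forall_mem_cons.1 hl
    exact (hS.zeroRegular_subScalar hμ).pcomp (ih hl)

variable [CompleteSpace X]

theorem IsSymmP.isClosed_shiftProd (hS : IsSymmP S) (hc : S.IsClosed) {l : List ℂ}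
    (hl : ∀ μ ∈ l, μ.im ≠ 0) : (shiftProd S l).IsClosed := by
  induction l with
  | nil => exact isClosed_pid
  | cons μ l ih =>
    obtain ⟨hμ, hl⟩ := List.forall_mem_cons.1 hl
    exact (hS.zeroRegular_subScalar hμ).isClosed_pcomp (isClosed_subScalar_iff.2 hc) (ih hl)

theorem IsSymmP.rank_orthogonal_range_shiftProd (hS : IsSymmP S) (hc : S.IsClosed)
    (hd : Dense (S.domain : Set X)) {l : List ℂ} (hl : ∀ μ ∈ l, μ.im ≠ 0) :
    Module.rank ℂ (shiftProd S l).toFun.rangeᗮ = (l.map (defect S)).sum := by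
  induction l with
  | nil =>
    have hrange : (pid X).toFun.range = ⊤ := Submodule.range_subtype ⊤
    rw [shiftProd, hrange, Submodule.top_orthogonal_eq_bot, rank_bot, List.map_nil, List.sum_nil]
  | cons μ l ih =>
    obtain ⟨hμ, hl⟩ := List.forall_mem_cons.1 hl
    have hrange := (hS.zeroRegular_shiftProd hl).isClosed_range (hS.isClosed_shiftProd hc hl)
    rw [shiftProd, rank_orthogonal_range_pcomp (T₂ := subScalar S μ) hd
      (hS.zeroRegular_subScalar hμ) (isClosed_subScalar_iff.2 hc) hrange, ih hl, List.map_cons,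
      List.sum_cons, defect]

end Power

section PowDomain

variable {R M : Type*} [CommRing R] [AddCommGroup M] [Module R M]

/-- The domain of the `n`-th power of the restriction of `T` to `V`. A partially defined operator is
such a restriction, and extending it to an everywhere defined `T` makes `p(T)` available for
polynomials `p`. -/
def powDomain (T : Module.End R M) (V : Submodule R M) (n : ℕ) : Submodule R M :=
  ⨅ j : Fin n, V.comap (T ^ (j : ℕ))

theorem mem_powDomain {T : Module.End R M} {V : Submodule R M} {n : ℕ} {f : M} :
    f ∈ powDomain T V n ↔ ∀ j < n, (T ^ j) f ∈ V := by
  simp only [powDomain, Submodule.mem_iInf, Submodule.mem_comap, Fin.forall_iff]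

theorem powDomain_zero (T : Module.End R M) (V : Submodule R M) : powDomain T V 0 = ⊤ :=
  iInf_of_empty _

-- On `powDomain T V p.natDegree` the lower-order terms of `p(T)` take values in `V`.
theorem powDomain_natDegree_succ (T : Module.End R M) (V : Submodule R M) {p : Polynomial R}
    (hp : p.Monic) : powDomain T V (p.natDegree + 1) =
      powDomain T V p.natDegree ⊓ V.comap (Polynomial.aeval T p) := by
  have aeval_mem_iff (f : M) (hf : f ∈ powDomain T V p.natDegree) :
      Polynomial.aeval T p f ∈ V ↔ (T ^ p.natDegree) f ∈ V := by
    rw [Polynomial.aeval_eq_sum_range, Finset.sum_range_succ, LinearMap.add_apply,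
      Polynomial.coeff_natDegree, hp.leadingCoeff, one_smul, LinearMap.sum_apply]
    refine V.add_mem_iff_right (V.sum_mem fun j hj => ?_)
    exact V.smul_mem _ (mem_powDomain.1 hf j (Finset.mem_range.1 hj))
  ext f
  calc f ∈ powDomain T V (p.natDegree + 1)
      ↔ f ∈ powDomain T V p.natDegree ∧ (T ^ p.natDegree) f ∈ V := by
        simp only [mem_powDomain, Nat.forall_lt_succ_right]
    _ ↔ f ∈ powDomain T V p.natDegree ⊓ V.comap (Polynomial.aeval T p) :=
        and_congr_right fun hf => (aeval_mem_iff f hf).symm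

end PowDomain

section Factorization

variable {X : Type*} [NormedAddCommGroup X] [InnerProductSpace ℂ X]

theorem mem_graph_toPMap {Y : Type*} [NormedAddCommGroup Y] [InnerProductSpace ℂ Y]
    {A : X →ₗ[ℂ] Y} {V : Submodule ℂ X} {x : X} {y : Y} :
    (x, y) ∈ (A.toPMap V).graph ↔ x ∈ V ∧ A x = y := by
  rw [LinearPMap.mem_graph_iff]
  exact ⟨by rintro ⟨f, rfl, h⟩; exact ⟨f.2, h⟩, fun h => ⟨⟨x, h.1⟩, rfl, h.2⟩⟩

theorem pcomp_toPMap {Y Z : Type*} [NormedAddCommGroup Y] [InnerProductSpace ℂ Y]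
    [NormedAddCommGroup Z] [InnerProductSpace ℂ Z] (A : Y →ₗ[ℂ] Z) (B : X →ₗ[ℂ] Y)
    (V : Submodule ℂ Y) (D : Submodule ℂ X) :
    pcomp (A.toPMap V) (B.toPMap D) = (A ∘ₗ B).toPMap (D ⊓ V.comap B) := by
  refine LinearPMap.eq_of_eq_graph (SetLike.ext fun ⟨x, z⟩ => mem_graph_pcomp.trans ?_)
  simp only [mem_graph_toPMap]
  constructor
  · rintro ⟨_, ⟨hD, rfl⟩, hV, rfl⟩
    exact ⟨⟨hD, hV⟩, rfl⟩
  · rintro ⟨⟨hD, hV⟩, rfl⟩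
    exact ⟨B x, ⟨hD, rfl⟩, hV, rfl⟩

theorem subScalar_toPMap (A : Module.End ℂ X) (V : Submodule ℂ X) (μ : ℂ) :
    subScalar (A.toPMap V) μ = (A - algebraMap ℂ (Module.End ℂ X) μ).toPMap V := rfl

theorem pmapPow_toPMap (T : Module.End ℂ X) (V : Submodule ℂ X) (n : ℕ) :
    pmapPow (T.toPMap V) n = (T ^ n).toPMap (powDomain T V n) := by
  induction n with
  | zero => rw [powDomain_zero]; rfl
  | succ n ih =>
    have hdom := powDomain_natDegree_succ T V (Polynomial.monic_X_pow (R := ℂ) n)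
    rw [Polynomial.natDegree_X_pow, Polynomial.aeval_X_pow] at hdom
    rw [pmapPow_succ, ih, pcomp_toPMap, ← hdom, pow_succ', Module.End.mul_eq_comp]

theorem shiftProd_toPMap (T : Module.End ℂ X) (V : Submodule ℂ X) (l : List ℂ) :
    shiftProd (T.toPMap V) l =
      (Polynomial.aeval T
        ((l : Multiset ℂ).map fun μ => Polynomial.X - Polynomial.C μ).prod).toPMap
        (powDomain T V l.length) := by
  induction l with
  | nil => rw [List.length_nil, powDomain_zero, Multiset.coe_nil, Multiset.map_zero,
      Multiset.prod_zero, map_one]; rfl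
  | cons μ l ih =>
    have hmonic := Polynomial.monic_multiset_prod_of_monic (l : Multiset ℂ)
      (fun μ => Polynomial.X - Polynomial.C μ) fun _ _ => Polynomial.monic_X_sub_C _
    have hdom := powDomain_natDegree_succ T V hmonic
    rw [Polynomial.natDegree_multiset_prod_X_sub_C_eq_card, Multiset.coe_card] at hdom
    rw [shiftProd, ih, subScalar_toPMap, pcomp_toPMap, ← hdom, ← Multiset.cons_coe,
      Multiset.map_cons, Multiset.prod_cons, map_mul, map_sub, Polynomial.aeval_X,
      Polynomial.aeval_C, Module.End.mul_eq_comp, List.length_cons]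

-- Extending `S` to a linear map `T` on all of `X` makes this the factorization of `Tⁿ - a`.
theorem shiftProd_nthRoots (S : X →ₗ.[ℂ] X) {n : ℕ} (hn : n ≠ 0) (a : ℂ) :
    shiftProd S (Polynomial.nthRoots n a).toList = subScalar (pmapPow S n) a := by
  obtain ⟨T, hT⟩ := LinearMap.exists_extend S.toFun
  have hS : T.toPMap S.domain = S :=
    LinearPMap.ext rfl fun x hx _ => LinearMap.congr_fun hT ⟨x, hx⟩
  rw [← hS]
  have hsplits := IsAlgClosed.splits (Polynomial.X ^ n - Polynomial.C a)
  have hprod := hsplits.eq_prod_roots_of_monic (Polynomial.monic_X_pow_sub_C a hn)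
  have hcard := hsplits.natDegree_eq_card_roots
  rw [Polynomial.natDegree_X_pow_sub_C] at hcard
  rw [shiftProd_toPMap, Multiset.coe_toList, Polynomial.nthRoots, ← hprod, Multiset.length_toList,
    ← hcard, pmapPow_toPMap, subScalar_toPMap, map_sub, Polynomial.aeval_X_pow, Polynomial.aeval_C]

end Factorization

section EvenPower

theorem im_ne_zero_of_mem_nthRoots {n : ℕ} (hn : n ≠ 0) {a w : ℂ} (ha : a.im ≠ 0)
    (hw : w ∈ Polynomial.nthRoots n a) : w.im ≠ 0 := by
  rw [Polynomial.mem_nthRoots hn.bot_lt] at hw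
  intro him
  have hreal : w = w.re := Complex.ext rfl him
  exact ha (by rw [← hw, hreal, ← Complex.ofReal_pow, Complex.ofReal_im])

-- Listed as `ζʲα` with `ζ` a primitive `2k`-th root of unity, the roots number `j` and `j + k` are
-- opposite, since `ζᵏ = -1`.
theorem exists_nthRoots_two_mul_eq_add_map_neg {K : Type*} [Field K] [IsAlgClosed K] (k : ℕ)
    [NeZero ((2 * k : ℕ) : K)] (a : K) :
    ∃ t : Multiset K, t.card = k ∧ Polynomial.nthRoots (2 * k) a = t + t.map Neg.neg := by
  have hk : 0 < 2 * k := (NeZero.of_neZero_natCast K).pos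
  obtain ⟨ζ, hζ⟩ := HasEnoughRootsOfUnity.exists_primitiveRoot K (2 * k)
  obtain ⟨α, hα⟩ := IsAlgClosed.exists_pow_nat_eq a hk
  have hζk : ζ ^ k = -1 := (hζ.pow hk (mul_comm 2 k)).eq_neg_one_of_two_right
  refine ⟨(Multiset.range k).map (ζ ^ · * α), by rw [Multiset.card_map, Multiset.card_range], ?_⟩
  rw [hζ.nthRoots_eq hα, two_mul, Multiset.range_add, Multiset.map_add, Multiset.map_map,
    Multiset.map_map]
  simp only [Function.comp_def, pow_add, hζk, neg_mul, one_mul]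

variable {X : Type*} [NormedAddCommGroup X] [InnerProductSpace ℂ X] [CompleteSpace X]
  {S : X →ₗ.[ℂ] X}

theorem IsSymmP.isClosed_pmapPow (hS : IsSymmP S) (hc : S.IsClosed) (n : ℕ) :
    (_root_.pmapPow S n).IsClosed := by
  rcases eq_or_ne n 0 with rfl | hn
  · exact isClosed_pid
  · rw [← isClosed_subScalar_iff (μ := Complex.I), ← shiftProd_nthRoots S hn]
    exact hS.isClosed_shiftProd hc fun μ hμ =>
      im_ne_zero_of_mem_nthRoots hn (by simp) (Multiset.mem_toList.1 hμ)

theorem IsSymmP.defect_pmapPow (hS : IsSymmP S) (hc : S.IsClosed)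
    (hd : Dense (S.domain : Set X)) {n : ℕ} (hn : n ≠ 0) {a : ℂ} (ha : a.im ≠ 0) :
    defect (_root_.pmapPow S n) a = ((Polynomial.nthRoots n a).map (defect S)).sum := by
  rw [defect, ← shiftProd_nthRoots S hn, hS.rank_orthogonal_range_shiftProd hc hd fun μ hμ =>
      im_ne_zero_of_mem_nthRoots hn ha (Multiset.mem_toList.1 hμ), ← Multiset.sum_coe,
    ← Multiset.map_coe, Multiset.coe_toList]

theorem IsSymmP.defect_pmapPow_two_mul (hS : IsSymmP S) (hc : S.IsClosed)
    (hd : Dense (S.domain : Set X)) {k : ℕ} (hk : k ≠ 0) {a : ℂ} (ha : a.im ≠ 0) :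
    defect (_root_.pmapPow S (2 * k)) a =
      k * (defect S (-Complex.I) + defect S Complex.I) := by
  have : NeZero k := ⟨hk⟩
  have h2k : 2 * k ≠ 0 := mul_ne_zero two_ne_zero hk
  obtain ⟨t, ht, hroots⟩ := exists_nthRoots_two_mul_eq_add_map_neg k a
  have hpair (z : ℂ) (hz : z ∈ t) :
      defect S z + defect S (-z) = defect S (-Complex.I) + defect S Complex.I := by
    refine hS.defect_add_defect_neg hc (im_ne_zero_of_mem_nthRoots h2k ha ?_)
    rw [hroots]
    exact Multiset.mem_add.2 (Or.inl hz)
  calc defect (_root_.pmapPow S (2 * k)) a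
      = ((Polynomial.nthRoots (2 * k) a).map (defect S)).sum := hS.defect_pmapPow hc hd h2k ha
    _ = (t.map fun z => defect S z + defect S (-z)).sum := by
      rw [hroots, Multiset.map_add, Multiset.sum_add, Multiset.map_map, Multiset.sum_map_add]
      rfl
    _ = k * (defect S (-Complex.I) + defect S Complex.I) := by
      rw [Multiset.map_congr rfl hpair, Multiset.map_const', Multiset.sum_replicate, ht,
        nsmul_eq_mul]

end EvenPower

/-- Even powers of a densely defined, closed, symmetric operator (deficiency indices
possibly infinite): if `S^{2ℓ}` is densely defined for `1 ≤ ℓ ≤ k` then `S^{2k}` is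
symmetric and closed, `‖S^{2k} f + f‖ ≥ ‖f‖` on its domain, and in cardinal
arithmetic `n₊(S^{2k}) = n₋(S^{2k}) = k·n₊(S) + k·n₋(S)`. -/
theorem even_powers_deficiency_cardinal (S : H →ₗ.[ℂ] H)
    (hd : Dense (S.domain : Set H)) (hc : S.IsClosed) (hsym : IsSymmP S)
    (k : ℕ) (hk : 1 ≤ k)
    (hdense : ∀ ℓ : ℕ, 1 ≤ ℓ → ℓ ≤ k →
      Dense (((pmapPow S (2 * ℓ)).domain : Submodule ℂ H) : Set H)) :
    IsSymmP (pmapPow S (2 * k)) ∧ (pmapPow S (2 * k)).IsClosed ∧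
    (∀ f : (pmapPow S (2 * k)).domain, ‖pmapPow S (2 * k) f + (f : H)‖ ≥ ‖(f : H)‖) ∧
    nPlus (pmapPow S (2 * k)) = (k : Cardinal) * nPlus S + (k : Cardinal) * nMinus S ∧
    nMinus (pmapPow S (2 * k)) = (k : Cardinal) * nPlus S + (k : Cardinal) * nMinus S := by
  have hk0 : k ≠ 0 := Nat.one_le_iff_ne_zero.1 hk
  have hdk := hdense k hk le_rfl
  have hdefect (a : ℂ) (ha : a.im ≠ 0) :
      defect (pmapPow S (2 * k)) a = k * nPlus S + k * nMinus S := by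
    rw [hsym.defect_pmapPow_two_mul hc hd hk0 ha, nPlus_eq_defect hd, nMinus_eq_defect hd, mul_add]
  refine ⟨hsym.pmapPow _, hsym.isClosed_pmapPow hc _, fun f => ?_, ?_, ?_⟩
  · exact norm_le_norm_add_of_re_inner_nonneg
      (hsym.re_inner_nonneg_of_mem_graph_pmapPow_two_mul (LinearPMap.mem_graph _ f))
  · rw [nPlus_eq_defect hdk, hdefect (-Complex.I) (by simp)]
  · rw [nMinus_eq_defect hdk, hdefect Complex.I (by simp)]
end
end
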